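/- Let h₁, h₂ ∈ ℝ² be unit vectors and let w₁, w₂ be the widths of Ω parallel to h₁ and to h₂, respectively. Then for every u ∈ 𝒰_Ω one has ‖u_{h₁}‖₁ ≤ 2 (w₁ / w₂) ‖u_{h₂}‖₁. -/

import Mathlib

open Set MeasureTheory
open scoped ENNReal

/-- Partial derivative of `u` in the `x` direction (junk value where `u` is not
differentiable). -/
noncomputable def ux (u : ℝ × ℝ → ℝ) (z : ℝ × ℝ) : ℝ := fderiv ℝ u z (1, 0)

/-- Partial derivative of `u` in the `y` direction. -/
noncomputable def uy (u : ℝ × ℝ → ℝ) (z : ℝ × ℝ) : ℝ := fderiv ℝ u z (0, 1)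

/-- Directional derivative of `u` in the direction `h`. -/
noncomputable def uh (h : ℝ × ℝ) (u : ℝ × ℝ → ℝ) (z : ℝ × ℝ) : ℝ := fderiv ℝ u z h

/-- The class `𝒰_Ω`: continuous concave functions on `Ω` vanishing on the boundary,
with uniformly bounded gradient over all interior points where it exists. -/
def MemU (Ω : Set (ℝ × ℝ)) (u : ℝ × ℝ → ℝ) : Prop :=
  ContinuousOn u Ω ∧ ConcaveOn ℝ Ω u ∧ (∀ z ∈ frontier Ω, u z = 0) ∧
    ∃ C : ℝ, ∀ z ∈ interior Ω, ∀ g : (ℝ × ℝ) →L[ℝ] ℝ, HasFDerivAt u g z → ‖g‖ ≤ C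

/-- The `L¹` norm of `f` over `Ω`. -/
noncomputable def L1N (Ω : Set (ℝ × ℝ)) (f : ℝ × ℝ → ℝ) : ℝ := ∫ z in Ω, |f z|

/-- The `L^p` norm of `f` over `Ω`, `p ∈ [1, ∞)`. -/
noncomputable def LpN (Ω : Set (ℝ × ℝ)) (p : ℝ) (f : ℝ × ℝ → ℝ) : ℝ :=
  (∫ z in Ω, |f z| ^ p) ^ (1 / p)

/-- The `L^∞` norm (essential supremum) of `f` over `Ω`. -/
noncomputable def LinfN (Ω : Set (ℝ × ℝ)) (f : ℝ × ℝ → ℝ) : ℝ≥0∞ :=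
  essSup (fun z => ENNReal.ofReal |f z|) (volume.restrict Ω)

/-- The width of `Ω` parallel to the (Euclidean unit) vector `h`: the distance between the
two lines of support of `Ω` parallel to `h`, i.e. the oscillation over `Ω` of the linear
functional given by the unit normal `(-h.2, h.1)` to `h`. -/
noncomputable def widthPar (Ω : Set (ℝ × ℝ)) (h : ℝ × ℝ) : ℝ :=
  sSup ((fun z : ℝ × ℝ => -h.2 * z.1 + h.1 * z.2) '' Ω) -
    sInf ((fun z : ℝ × ℝ => -h.2 * z.1 + h.1 * z.2) '' Ω)

/-!
On almost every line parallel to `h`, a function `u ∈ 𝒰_Ω` is concave, rises from `0` to its maximum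
and falls back to `0`, so `|u_h|` integrates along the line to twice that maximum. By Fubini
`‖u_h‖₁` is twice the integral of the maxima, as a function on the projection of `Ω` along `h`, an
interval of length `w`. This function is nonnegative and concave with maximum `M = max u`; its
integral is at most `M w` and at least the area `M w / 2` of an inscribed triangle. Hence
`M w ≤ ‖u_h‖₁ ≤ 2 M w` for every direction, and `M` is eliminated between two of them.
-/

open Filter Topology Module

section Real

variable {f : ℝ → ℝ} {a b m : ℝ} {s : Set ℝ}

theorem monotoneOn_inter_Iic_of_isMaxOn (hf : ConcaveOn ℝ s f) (hm : m ∈ s)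
    (hmax : IsMaxOn f s m) : MonotoneOn f (s ∩ Iic m) := by
  intro x hx y hy hxy
  have h := hf.ge_on_segment hx.1 hm (Icc_subset_segment ⟨hxy, hy.2⟩)
  rwa [min_eq_left (hmax hx.1)] at h

theorem antitoneOn_inter_Ici_of_isMaxOn (hf : ConcaveOn ℝ s f) (hm : m ∈ s)
    (hmax : IsMaxOn f s m) : AntitoneOn f (s ∩ Ici m) := by
  intro x hx y hy hxy
  have h := hf.ge_on_segment hm hy.1 (Icc_subset_segment ⟨hx.2, hxy⟩)
  rwa [min_eq_right (hmax hy.1)] at h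

theorem differentiableWithinAt_Ioi_of_concaveOn (hf : ConcaveOn ℝ (Icc a b) f) {x : ℝ}
    (hx : x ∈ Ioo a b) : DifferentiableWithinAt ℝ f (Ioi x) x := by
  have h := hf.neg.differentiableWithinAt_Ioi_of_mem_interior (interior_Icc (a := a) ▸ hx)
  simpa using h.neg

theorem ae_derivWithin_Ioi_eq_deriv_of_monotoneOn (hf : MonotoneOn f (Icc a b)) :
    ∀ᵐ x, x ∈ Ioo a b → derivWithin f (Ioi x) x = deriv f x := by
  filter_upwards [hf.ae_differentiableWithinAt_of_mem] with x hx hxI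
  exact ((hx (Ioo_subset_Icc_self hxI)).differentiableAt
    (Icc_mem_nhds hxI.1 hxI.2)).derivWithin (uniqueDiffWithinAt_Ioi x)

theorem lintegral_enorm_deriv_of_monotoneOn (hab : a ≤ b) (hf : MonotoneOn f (Icc a b))
    (hc : ContinuousOn f (Icc a b))
    (hd : ∀ x ∈ Ioo a b, DifferentiableWithinAt ℝ f (Ioi x) x) :
    ∫⁻ x in Ioo a b, ‖deriv f x‖ₑ = ENNReal.ofReal (f b - f a) := by
  have hae := (ae_restrict_iff' measurableSet_Ioo).2 (ae_derivWithin_Ioi_eq_deriv_of_monotoneOn hf)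
  have hint : IntegrableOn (deriv f) (Ioo a b) :=
    (intervalIntegrable_iff_integrableOn_Ioo_of_le hab).1
      (MonotoneOn.intervalIntegrable_deriv (by rwa [uIcc_of_le hab]))
  have hnonneg : ∀ x ∈ Ioo a b, 0 ≤ deriv f x := fun x hx => by
    rw [← derivWithin_of_mem_nhds (Icc_mem_nhds hx.1 hx.2)]
    exact hf.derivWithin_nonneg
  have hftc : ∫ x in Ioo a b, deriv f x = f b - f a := by
    rw [← integral_congr_ae hae, ← integral_Ioc_eq_integral_Ioo,
      ← intervalIntegral.integral_of_le hab]
    exact intervalIntegral.integral_eq_sub_of_hasDeriv_right_of_le hab hc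
      (fun x hx => (hd x hx).hasDerivWithinAt)
      ((intervalIntegrable_iff_integrableOn_Ioo_of_le hab).2 (hint.congr (EventuallyEq.symm hae)))
  calc ∫⁻ x in Ioo a b, ‖deriv f x‖ₑ
      = ∫⁻ x in Ioo a b, ENNReal.ofReal (deriv f x) :=
        setLIntegral_congr_fun measurableSet_Ioo fun x hx => Real.enorm_of_nonneg (hnonneg x hx)
    _ = ENNReal.ofReal (∫ x in Ioo a b, deriv f x) :=
        (ofReal_integral_eq_lintegral_ofReal hint
          ((ae_restrict_iff' measurableSet_Ioo).2 (ae_of_all _ hnonneg))).symm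
    _ = ENNReal.ofReal (f b - f a) := by rw [hftc]

theorem lintegral_enorm_deriv_of_concaveOn (hab : a ≤ b) (hf : ConcaveOn ℝ (Icc a b) f)
    (hc : ContinuousOn f (Icc a b)) (ha : f a = 0) (hb : f b = 0) :
    ∫⁻ x in Icc a b, ‖deriv f x‖ₑ = ENNReal.ofReal (2 * sSup (f '' Icc a b)) := by
  obtain ⟨m, hm, hsup, hmax⟩ :=
    isCompact_Icc.exists_sSup_image_eq_and_ge (nonempty_Icc.2 hab) hc
  have hd := fun x (hx : x ∈ Ioo a b) => differentiableWithinAt_Ioi_of_concaveOn hf hx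
  have hleft := lintegral_enorm_deriv_of_monotoneOn hm.1
    ((monotoneOn_inter_Iic_of_isMaxOn hf hm hmax).mono fun x hx =>
      ⟨⟨hx.1, hx.2.trans hm.2⟩, hx.2⟩)
    (hc.mono (Icc_subset_Icc_right hm.2)) fun x hx => hd x ⟨hx.1, hx.2.trans_le hm.2⟩
  have hright := lintegral_enorm_deriv_of_monotoneOn hm.2
    ((antitoneOn_inter_Ici_of_isMaxOn hf hm hmax).neg.mono fun x hx =>
      ⟨⟨hm.1.trans hx.1, hx.2⟩, hx.1⟩)
    (hc.mono (Icc_subset_Icc_left hm.1)).neg fun x hx => (hd x ⟨hm.1.trans_lt hx.1, hx.2⟩).neg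
  simp only [deriv.fun_neg, enorm_neg, ha, hb, neg_zero, sub_zero, zero_sub, neg_neg]
    at hleft hright
  have h0 : 0 ≤ f m := ha ▸ hmax a (left_mem_Icc.2 hab)
  rw [setLIntegral_congr Ioo_ae_eq_Ioc] at hleft hright
  rw [setLIntegral_congr Ioc_ae_eq_Icc.symm, ← Ioc_union_Ioc_eq_Ioc hm.1 hm.2,
    lintegral_union measurableSet_Ioc (Ioc_disjoint_Ioc_of_le le_rfl), hleft, hright, hsup,
    ← ENNReal.ofReal_add h0 h0, two_mul]

theorem volume_real_eq_sSup_sub_sInf (hs : IsCompact s) (hconv : Convex ℝ s) :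
    volume.real s = sSup s - sInf s := by
  rcases s.eq_empty_or_nonempty with rfl | hne
  · simp
  have hIcc := eq_Icc_of_connected_compact ⟨hne, hconv.isPreconnected⟩ hs
  conv_lhs => rw [hIcc]
  exact Real.volume_real_Icc_of_le (csInf_le_csSup hne hs.bddBelow hs.bddAbove)

end Real

section FiniteDimensional

variable {E : Type*} [NormedAddCommGroup E] [NormedSpace ℝ E] [FiniteDimensional ℝ E]
  [MeasurableSpace E] [BorelSpace E] {μ : Measure E} [μ.IsAddHaarMeasure] {f : E → ℝ} {s : Set E}

theorem ae_differentiableAt_of_locallyLipschitzOn (hs : IsOpen s)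
    (hf : LocallyLipschitzOn s f) : ∀ᵐ x ∂μ, x ∈ s → DifferentiableAt ℝ f x := by
  have : ProperSpace E := FiniteDimensional.proper_real E
  refine measure_null_of_locally_null _ fun x hx => ?_
  simp only [mem_compl_iff, mem_ofPred_eq, Classical.not_imp] at hx
  obtain ⟨K, t, ht, hK⟩ := hf hx.1
  rw [hs.nhdsWithin_eq hx.1] at ht
  refine ⟨{y | y ∈ interior t ∧ ¬ DifferentiableAt ℝ f y}, ?_, ?_⟩
  · filter_upwards [self_mem_nhdsWithin, nhdsWithin_le_nhds (interior_mem_nhds.2 ht)] with y hy hyt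
    simp only [mem_compl_iff, mem_ofPred_eq, Classical.not_imp] at hy
    exact ⟨hyt, hy.2⟩
  · refine measure_mono_null ?_ (hK.ae_differentiableWithinAt_of_mem (μ := μ))
    rintro y ⟨hyt, hy⟩ hd
    exact hy ((hd (interior_subset hyt)).differentiableAt (mem_interior_iff_mem_nhds.1 hyt))

theorem ae_differentiableAt_of_concaveOn (hf : ConcaveOn ℝ s f) :
    ∀ᵐ x ∂μ, x ∈ s → DifferentiableAt ℝ f x := by
  filter_upwards [ae_differentiableAt_of_locallyLipschitzOn (μ := μ) isOpen_interior
    hf.locallyLipschitzOn_interior, measure_eq_zero_iff_ae_notMem.1 (hf.1.addHaar_frontier μ)]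
    with x hx hfr hxs
  exact hx (by_contra fun hi => hfr ⟨subset_closure hxs, hi⟩)

theorem aestronglyMeasurable_of_concaveOn (hf : ConcaveOn ℝ s f) :
    AEStronglyMeasurable f (μ.restrict s) := by
  rw [← Measure.restrict_congr_set
    (interior_ae_eq_of_null_frontier (hf.1.addHaar_frontier μ))]
  exact hf.continuousOn_interior.aestronglyMeasurable isOpen_interior.measurableSet

/-- The integral of `f` over the image of `s` under the homothety with centre `p` and ratio `r` is
at most its integral over `s`, while concavity bounds `f` on that image from below. -/
theorem mul_setIntegral_add_le_of_concaveOn (hf : ConcaveOn ℝ s f) (hf0 : ∀ x ∈ s, 0 ≤ f x)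
    (hfi : IntegrableOn f s μ) (hμs : μ s ≠ ∞) {p : E} (hp : p ∈ s) {r : ℝ}
    (hr : r ∈ Ioo (0 : ℝ) 1) :
    r * ∫ x in s, f x ∂μ + (1 - r) * (f p * μ.real s) ≤
      (r ^ finrank ℝ E)⁻¹ * ∫ x in s, f x ∂μ := by
  have hsm : NullMeasurableSet s μ := hf.1.nullMeasurableSet μ
  have hr1 : 0 ≤ 1 - r := sub_nonneg.2 hr.2.le
  set g : E → ℝ := s.indicator f
  have hg0 : ∀ x, 0 ≤ g x := indicator_nonneg hf0
  have hgi : Integrable (fun x => g (r • x + (1 - r) • p)) μ :=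
    ((hfi.integrable_indicator₀ hsm).comp_add_right ((1 - r) • p)).comp_smul hr.1.ne'
  have hle : ∀ x ∈ s, r * f x + (1 - r) * f p ≤ g (r • x + (1 - r) • p) := fun x hx => by
    have hmem := hf.1 hx hp hr.1.le hr1 (add_sub_cancel _ _)
    simpa only [g, indicator_of_mem hmem, smul_eq_mul] using
      hf.2 hx hp hr.1.le hr1 (add_sub_cancel _ _)
  have hconst : IntegrableOn (fun _ => (1 - r) * f p) s μ := integrableOn_const hμs
  calc r * ∫ x in s, f x ∂μ + (1 - r) * (f p * μ.real s)
      = ∫ x in s, (r * f x + (1 - r) * f p) ∂μ := by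
        rw [integral_add (hfi.const_mul r) hconst, integral_const_mul, setIntegral_const,
          smul_eq_mul]
        ring
    _ ≤ ∫ x in s, g (r • x + (1 - r) • p) ∂μ :=
        setIntegral_mono_on₀ ((hfi.const_mul r).add hconst) hgi.integrableOn hsm hle
    _ ≤ ∫ x, g (r • x + (1 - r) • p) ∂μ := setIntegral_le_integral hgi (ae_of_all _ fun x => hg0 _)
    _ = (r ^ finrank ℝ E)⁻¹ * ∫ x in s, f x ∂μ := by
        rw [Measure.integral_comp_smul μ (fun x => g (x + (1 - r) • p)) r,
          integral_add_right_eq_self, integral_indicator₀ hsm, smul_eq_mul,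
          abs_of_nonneg (inv_nonneg.2 (pow_nonneg hr.1.le _))]

/-- The right-hand side is `finrank ℝ E + 1` times the volume under the graph of `f`, which contains
the cone with base `s` and apex `(p, f p)`. -/
theorem mul_measureReal_le_of_concaveOn (hf : ConcaveOn ℝ s f) (hf0 : ∀ x ∈ s, 0 ≤ f x)
    (hfi : IntegrableOn f s μ) (hμs : μ s ≠ ∞) {p : E} (hp : p ∈ s) :
    f p * μ.real s ≤ (finrank ℝ E + 1) * ∫ x in s, f x ∂μ := by
  set n := finrank ℝ E
  set I := ∫ x in s, f x ∂μ
  have hI : 0 ≤ I := setIntegral_nonneg_of_ae_restrict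
    ((ae_restrict_iff'₀ (hf.1.nullMeasurableSet μ)).2 (ae_of_all _ hf0))
  have hpow : ∀ r ∈ Ioo (0 : ℝ) 1, r ^ n * (f p * μ.real s) ≤ (n + 1) * I := fun r hr => by
    have hrn : 0 < r ^ n := pow_pos hr.1 n
    have hhom := mul_setIntegral_add_le_of_concaveOn hf hf0 hfi hμs hp hr
    rw [← mul_le_mul_iff_right₀ hrn, mul_inv_cancel_left₀ hrn.ne'] at hhom
    have hbernoulli := one_add_mul_le_pow (a := r - 1) (by linarith [hr.1]) (n + 1)
    rw [add_sub_cancel, pow_succ, Nat.cast_add_one] at hbernoulli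
    refine le_of_mul_le_mul_left ?_ (sub_pos.2 hr.2)
    linarith [mul_le_mul_of_nonneg_right hbernoulli hI]
  have hlim : Tendsto (fun r : ℝ => r ^ n * (f p * μ.real s)) (𝓝[<] 1) (𝓝 (f p * μ.real s)) :=
    (Continuous.tendsto' (by fun_prop) _ _ (by simp)).mono_left nhdsWithin_le_nhds
  exact le_of_tendsto hlim (eventually_of_mem (Ioo_mem_nhdsLT one_pos) hpow)

end FiniteDimensional

/-- A concave cap over a compact set `Ω`: a continuous concave function on `Ω` that vanishes on the
boundary. These are the functions of `MemU` without the bound on the gradient. -/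
structure IsConcaveCap {E : Type*} [TopologicalSpace E] [AddCommMonoid E] [SMul ℝ E]
    (Ω : Set E) (u : E → ℝ) : Prop where
  isCompact : IsCompact Ω
  continuousOn : ContinuousOn u Ω
  concaveOn : ConcaveOn ℝ Ω u
  eq_zero_of_mem_frontier : ∀ z ∈ frontier Ω, u z = 0

theorem IsConcaveCap.comp_continuousLinearEquiv {E E' : Type*} [TopologicalSpace E]
    [AddCommMonoid E] [Module ℝ E] [TopologicalSpace E'] [AddCommMonoid E'] [Module ℝ E']
    {Ω : Set E} {u : E → ℝ} (hu : IsConcaveCap Ω u) (L : E' ≃L[ℝ] E) :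
    IsConcaveCap (L ⁻¹' Ω) (u ∘ L) where
  isCompact := L.toHomeomorph.isCompact_preimage.2 hu.isCompact
  continuousOn := hu.continuousOn.comp L.continuous.continuousOn (mapsTo_preimage L Ω)
  concaveOn := hu.concaveOn.comp_linearMap L.toLinearMap
  eq_zero_of_mem_frontier _ hz :=
    hu.eq_zero_of_mem_frontier _ ((L.toHomeomorph.preimage_frontier Ω).ge hz)

/-- The supremum of `u` over the part of `Ω` on the vertical line above `t`, so that the graph of
`fiberSup Ω u` is the upper outline of the projection of the graph of `u` along that line. It is
`0`, the junk value of `sSup`, when the line misses `Ω`. -/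
noncomputable def fiberSup {F : Type*} (Ω : Set (F × ℝ)) (u : F × ℝ → ℝ) (t : F) : ℝ :=
  sSup ((fun s => u (t, s)) '' (Prod.mk t ⁻¹' Ω))

section Fiber

theorem mk_preimage_eq_empty_of_notMem {X Y : Type*} {Ω : Set (X × Y)} {x : X}
    (hx : x ∉ Prod.fst '' Ω) : Prod.mk x ⁻¹' Ω = ∅ :=
  eq_empty_of_forall_notMem fun _ hy => hx ⟨_, hy, rfl⟩

theorem fiberSup_eq_zero_of_notMem {F : Type*} {Ω : Set (F × ℝ)} {u : F × ℝ → ℝ} {t : F}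
    (ht : t ∉ Prod.fst '' Ω) : fiberSup Ω u t = 0 := by
  rw [fiberSup, mk_preimage_eq_empty_of_notMem ht, image_empty, Real.sSup_empty]

theorem image_comp_mk_subset {F : Type*} {Ω : Set (F × ℝ)} {u : F × ℝ → ℝ} {t : F} :
    (fun s => u (t, s)) '' (Prod.mk t ⁻¹' Ω) ⊆ u '' Ω := by
  rintro _ ⟨s, hs, rfl⟩
  exact mem_image_of_mem u hs

theorem isCompact_mk_preimage {X Y : Type*} [TopologicalSpace X] [TopologicalSpace Y] [T2Space X]
    [T2Space Y] {Ω : Set (X × Y)} (hΩ : IsCompact Ω) (x : X) : IsCompact (Prod.mk x ⁻¹' Ω) :=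
  (hΩ.image continuous_snd).of_isClosed_subset (hΩ.isClosed.preimage (by fun_prop))
    fun y hy => ⟨(x, y), hy, rfl⟩

variable {F : Type*} [NormedAddCommGroup F] [NormedSpace ℝ F] {Ω : Set (F × ℝ)} {u : F × ℝ → ℝ}
  {t : F} {s : ℝ}

theorem exists_mk_preimage_eq_Icc (hΩc : IsCompact Ω) (hΩ : Convex ℝ Ω)
    (ht : t ∈ Prod.fst '' Ω) :
    ∃ a b, a ≤ b ∧ Prod.mk t ⁻¹' Ω = Icc a b ∧ (t, a) ∈ frontier Ω ∧ (t, b) ∈ frontier Ω := by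
  obtain ⟨s, hs⟩ : ∃ s, (t, s) ∈ Ω := by simpa using ht
  have hmk : Continuous (Prod.mk t : ℝ → F × ℝ) := by fun_prop
  have hconvex : Convex ℝ (Prod.mk t ⁻¹' Ω) :=
    hΩ.affine_preimage ((AffineMap.const ℝ ℝ t).prod (AffineMap.id ℝ ℝ))
  obtain ⟨a, b, hIcc⟩ : ∃ a b, Prod.mk t ⁻¹' Ω = Icc a b :=
    ⟨_, _, eq_Icc_of_connected_compact ⟨⟨s, hs⟩, hconvex.isPreconnected⟩
      (isCompact_mk_preimage hΩc t)⟩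
  have hab : a ≤ b := nonempty_Icc.1 (hIcc ▸ ⟨s, hs⟩)
  have hfrontier : ∀ x ∈ Icc a b, x ∉ Ioo a b → (t, x) ∈ frontier Ω := fun x hx hx' => by
    rw [← interior_Icc, ← hIcc] at hx'
    rw [← hIcc] at hx
    exact ⟨subset_closure hx, fun h => hx' (preimage_interior_subset_interior_preimage hmk h)⟩
  exact ⟨a, b, hab, hIcc, hfrontier a (left_mem_Icc.2 hab) fun h => h.1.false,
    hfrontier b (right_mem_Icc.2 hab) fun h => h.2.false⟩

theorem concaveOn_comp_mk (hu : ConcaveOn ℝ Ω u) :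
    ConcaveOn ℝ (Prod.mk t ⁻¹' Ω) fun s => u (t, s) :=
  hu.comp_affineMap ((AffineMap.const ℝ ℝ t).prod (AffineMap.id ℝ ℝ))

theorem deriv_comp_mk (hu : DifferentiableAt ℝ u (t, s)) :
    deriv (fun x => u (t, x)) s = fderiv ℝ u (t, s) (0, 1) :=
  (hu.hasFDerivAt.comp_hasDerivAt s ((hasDerivAt_const s t).prodMk (hasDerivAt_id s))).deriv

namespace IsConcaveCap

theorem bddAbove_image (hu : IsConcaveCap Ω u) : BddAbove (u '' Ω) :=
  (hu.isCompact.image_of_continuousOn hu.continuousOn).bddAbove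

theorem le_fiberSup (hu : IsConcaveCap Ω u) (hs : (t, s) ∈ Ω) : u (t, s) ≤ fiberSup Ω u t :=
  le_csSup (hu.bddAbove_image.mono image_comp_mk_subset) ⟨s, hs, rfl⟩

theorem fiberSup_nonneg (hu : IsConcaveCap Ω u) (t : F) : 0 ≤ fiberSup Ω u t := by
  by_cases ht : t ∈ Prod.fst '' Ω
  · obtain ⟨a, b, hab, hIcc, ha, -⟩ := exists_mk_preimage_eq_Icc hu.isCompact hu.concaveOn.1 ht
    exact hu.eq_zero_of_mem_frontier _ ha ▸ hu.le_fiberSup (hIcc.ge (left_mem_Icc.2 hab))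
  · exact (fiberSup_eq_zero_of_notMem ht).ge

theorem fiberSup_le_sSup_image (hu : IsConcaveCap Ω u) (ht : t ∈ Prod.fst '' Ω) :
    fiberSup Ω u t ≤ sSup (u '' Ω) := by
  obtain ⟨⟨_, s⟩, hs, rfl⟩ := ht
  exact csSup_le_csSup hu.bddAbove_image ⟨_, s, hs, rfl⟩ image_comp_mk_subset

theorem exists_eq_fiberSup (hu : IsConcaveCap Ω u) (ht : t ∈ Prod.fst '' Ω) :
    ∃ s, (t, s) ∈ Ω ∧ u (t, s) = fiberSup Ω u t := by
  obtain ⟨⟨_, s⟩, hs, rfl⟩ := ht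
  obtain ⟨m, hm, hmax⟩ := (isCompact_mk_preimage hu.isCompact _).exists_sSup_image_eq
    ⟨s, hs⟩ (hu.continuousOn.comp (by fun_prop) fun _ hx => hx)
  exact ⟨m, hm, hmax.symm⟩

theorem concaveOn_fiberSup (hu : IsConcaveCap Ω u) :
    ConcaveOn ℝ (Prod.fst '' Ω) (fiberSup Ω u) := by
  refine ⟨hu.concaveOn.1.linear_image (LinearMap.fst ℝ F ℝ), fun x hx y hy α β hα hβ hαβ => ?_⟩
  obtain ⟨x', hx', hux⟩ := hu.exists_eq_fiberSup hx
  obtain ⟨y', hy', huy⟩ := hu.exists_eq_fiberSup hy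
  rw [← hux, ← huy]
  exact (hu.concaveOn.2 hx' hy' hα hβ hαβ).trans
    (hu.le_fiberSup (hu.concaveOn.1 hx' hy' hα hβ hαβ))

theorem lintegral_enorm_fderiv_mk (hu : IsConcaveCap Ω u)
    (hd : ∀ᵐ s, (t, s) ∈ Ω → DifferentiableAt ℝ u (t, s)) :
    ∫⁻ s in Prod.mk t ⁻¹' Ω, ‖fderiv ℝ u (t, s) (0, 1)‖ₑ = ENNReal.ofReal (2 * fiberSup Ω u t) := by
  by_cases ht : t ∈ Prod.fst '' Ω
  · obtain ⟨a, b, hab, hIcc, ha, hb⟩ := exists_mk_preimage_eq_Icc hu.isCompact hu.concaveOn.1 ht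
    have hmaps : MapsTo (Prod.mk t) (Icc a b) Ω := hIcc.ge
    have hderiv : ∀ᵐ s, s ∈ Icc a b →
        ‖fderiv ℝ u (t, s) (0, 1)‖ₑ = ‖deriv (fun x => u (t, x)) s‖ₑ := by
      filter_upwards [hd] with s hds hs
      rw [deriv_comp_mk (hds (hmaps hs))]
    rw [fiberSup, hIcc, setLIntegral_congr_fun_ae measurableSet_Icc hderiv]
    exact lintegral_enorm_deriv_of_concaveOn hab (hIcc ▸ concaveOn_comp_mk hu.concaveOn)
      (hu.continuousOn.comp (by fun_prop) hmaps) (hu.eq_zero_of_mem_frontier _ ha)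
      (hu.eq_zero_of_mem_frontier _ hb)
  · rw [fiberSup_eq_zero_of_notMem ht, mk_preimage_eq_empty_of_notMem ht, Measure.restrict_empty,
      lintegral_zero_measure, mul_zero, ENNReal.ofReal_zero]

variable [FiniteDimensional ℝ F] [MeasurableSpace F] [BorelSpace F] {μ : Measure F}
  [μ.IsAddHaarMeasure]

theorem lintegral_enorm_fderiv_snd (hu : IsConcaveCap Ω u) :
    ∫⁻ z in Ω, ‖fderiv ℝ u z (0, 1)‖ₑ ∂(μ.prod volume) =
      ∫⁻ t, ENNReal.ofReal (2 * fiberSup Ω u t) ∂μ := by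
  have : ProperSpace F := FiniteDimensional.proper_real F
  have hΩm : MeasurableSet Ω := hu.isCompact.isClosed.measurableSet
  have hmeas : Measurable fun z => ‖fderiv ℝ u z (0, 1)‖ₑ :=
    (measurable_fderiv_apply_const ℝ u (0, 1)).enorm
  have hd : ∀ᵐ z ∂μ.prod volume, z ∈ Ω → DifferentiableAt ℝ u z :=
    ae_differentiableAt_of_concaveOn hu.concaveOn
  rw [← lintegral_indicator hΩm, lintegral_prod _ (hmeas.indicator hΩm).aemeasurable]
  refine lintegral_congr_ae ?_
  filter_upwards [Measure.ae_ae_of_ae_prod hd] with t ht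
  rw [← hu.lintegral_enorm_fderiv_mk ht, ← lintegral_indicator (hΩm.preimage (by fun_prop))]
  rfl

theorem integrableOn_fiberSup (hu : IsConcaveCap Ω u) :
    IntegrableOn (fiberSup Ω u) (Prod.fst '' Ω) μ := by
  refine IntegrableOn.of_bound (hu.isCompact.image continuous_fst).measure_lt_top
    (aestronglyMeasurable_of_concaveOn hu.concaveOn_fiberSup) (sSup (u '' Ω))
    ((ae_restrict_iff' (hu.isCompact.image continuous_fst).measurableSet).2
      (ae_of_all _ fun t ht => ?_))
  rw [Real.norm_of_nonneg (hu.fiberSup_nonneg t)]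
  exact hu.fiberSup_le_sSup_image ht

/-- On almost every vertical line, `|∂u/∂s|` integrates to the total variation of a concave function
rising from `0` to its maximum `fiberSup Ω u t` and falling back to `0`. -/
theorem integral_abs_fderiv_snd (hu : IsConcaveCap Ω u) :
    ∫ z in Ω, |fderiv ℝ u z (0, 1)| ∂(μ.prod volume) =
      2 * ∫ t in Prod.fst '' Ω, fiberSup Ω u t ∂μ := by
  have hmeas := (measurable_fderiv_apply_const ℝ u (0, 1)).aestronglyMeasurable
    (μ := (μ.prod volume).restrict Ω)
  have hzero : ∀ t ∉ Prod.fst '' Ω, ENNReal.ofReal (2 * fiberSup Ω u t) = 0 := fun t ht => by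
    rw [fiberSup_eq_zero_of_notMem ht, mul_zero, ENNReal.ofReal_zero]
  calc ∫ z in Ω, |fderiv ℝ u z (0, 1)| ∂(μ.prod volume)
      = (∫⁻ t, ENNReal.ofReal (2 * fiberSup Ω u t) ∂μ).toReal := by
        rw [← hu.lintegral_enorm_fderiv_snd]
        exact integral_norm_eq_lintegral_enorm hmeas
    _ = (∫⁻ t in Prod.fst '' Ω, ENNReal.ofReal (2 * fiberSup Ω u t) ∂μ).toReal := by
        rw [setLIntegral_eq_of_support_subset (Function.support_subset_iff'.2 hzero)]
    _ = ∫ t in Prod.fst '' Ω, 2 * fiberSup Ω u t ∂μ :=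
        (integral_eq_lintegral_of_nonneg_ae
          (ae_of_all _ fun t => mul_nonneg zero_le_two (hu.fiberSup_nonneg t))
          (hu.integrableOn_fiberSup.1.const_mul 2)).symm
    _ = 2 * ∫ t in Prod.fst '' Ω, fiberSup Ω u t ∂μ := integral_const_mul _ _

theorem integral_abs_fderiv_snd_le (hu : IsConcaveCap Ω u) :
    ∫ z in Ω, |fderiv ℝ u z (0, 1)| ∂(μ.prod volume) ≤
      2 * (sSup (u '' Ω) * μ.real (Prod.fst '' Ω)) := by
  rw [hu.integral_abs_fderiv_snd]
  gcongr
  calc ∫ t in Prod.fst '' Ω, fiberSup Ω u t ∂μ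
      ≤ ∫ _ in Prod.fst '' Ω, sSup (u '' Ω) ∂μ :=
        setIntegral_mono_on hu.integrableOn_fiberSup
          (integrableOn_const (hu.isCompact.image continuous_fst).measure_ne_top)
          (hu.isCompact.image continuous_fst).measurableSet fun _ => hu.fiberSup_le_sSup_image
    _ = sSup (u '' Ω) * μ.real (Prod.fst '' Ω) := by
        rw [setIntegral_const, smul_eq_mul, mul_comm]

theorem le_integral_abs_fderiv_snd (hu : IsConcaveCap Ω u) :
    2 * (sSup (u '' Ω) * μ.real (Prod.fst '' Ω)) ≤
      (finrank ℝ F + 1) * ∫ z in Ω, |fderiv ℝ u z (0, 1)| ∂(μ.prod volume) := by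
  rcases Ω.eq_empty_or_nonempty with rfl | hne
  · simp
  obtain ⟨⟨t, s⟩, hp, hsup⟩ := hu.isCompact.exists_sSup_image_eq hne hu.continuousOn
  rw [hu.integral_abs_fderiv_snd, hsup, mul_left_comm (_ + _ : ℝ)]
  gcongr 2 * ?_
  calc u (t, s) * μ.real (Prod.fst '' Ω)
      ≤ fiberSup Ω u t * μ.real (Prod.fst '' Ω) := by gcongr; exact hu.le_fiberSup hp
    _ ≤ (finrank ℝ F + 1) * ∫ t in Prod.fst '' Ω, fiberSup Ω u t ∂μ :=
        mul_measureReal_le_of_concaveOn hu.concaveOn_fiberSup (fun t _ => hu.fiberSup_nonneg t)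
          hu.integrableOn_fiberSup (hu.isCompact.image continuous_fst).measure_ne_top ⟨_, hp, rfl⟩

end IsConcaveCap

end Fiber

section Plane

variable {Ω : Set (ℝ × ℝ)} {u : ℝ × ℝ → ℝ} {h : ℝ × ℝ}

theorem sq_add_sq_pos (hh : h ≠ 0) : 0 < h.1 ^ 2 + h.2 ^ 2 := by
  refine (by positivity : 0 ≤ h.1 ^ 2 + h.2 ^ 2).lt_of_ne' fun h0 => hh ?_
  obtain ⟨h1, h2⟩ := (add_eq_zero_iff_of_nonneg (sq_nonneg _) (sq_nonneg _)).1 h0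
  exact Prod.ext (pow_eq_zero_iff two_ne_zero |>.1 h1) (pow_eq_zero_iff two_ne_zero |>.1 h2)

/-- Coordinates of the plane adapted to a direction `h ≠ 0`: `(t, s)` is sent to the point at
position `s` on the line parallel to `h` on which the functional of `widthPar` takes the value `t`.
The normal vector is divided by `|h|²`, so that the determinant is `-1` whatever the length of `h`
is. -/
noncomputable def lineCoord (h : ℝ × ℝ) (hh : h ≠ 0) : (ℝ × ℝ) ≃L[ℝ] ℝ × ℝ :=
  LinearEquiv.toContinuousLinearEquiv
    { toFun := fun z => (z.1 / (h.1 ^ 2 + h.2 ^ 2)) • (-h.2, h.1) + z.2 • h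
      map_add' := fun x y => by simp only [Prod.fst_add, Prod.snd_add, add_div]; module
      map_smul' := fun c x => by
        simp only [Prod.smul_fst, Prod.smul_snd, smul_eq_mul, mul_div_assoc, RingHom.id_apply]
        module
      invFun := fun z =>
        (-h.2 * z.1 + h.1 * z.2, (h.1 * z.1 + h.2 * z.2) / (h.1 ^ 2 + h.2 ^ 2))
      left_inv := fun z => by
        have := (sq_add_sq_pos hh).ne'
        ext <;> simp only [Prod.smul_mk, smul_eq_mul, Prod.fst_add, Prod.smul_fst, Prod.snd_add,
          Prod.smul_snd] <;> field_simp <;> ring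
      right_inv := fun z => by
        have := (sq_add_sq_pos hh).ne'
        ext <;> simp only [Prod.smul_mk, smul_eq_mul, Prod.fst_add, Prod.smul_fst, Prod.snd_add,
          Prod.smul_snd] <;> field_simp <;> ring }

theorem lineCoord_one_zero (hh : h ≠ 0) :
    lineCoord h hh (1, 0) = (h.1 ^ 2 + h.2 ^ 2)⁻¹ • (-h.2, h.1) := by
  simp [lineCoord]

theorem lineCoord_zero_one (hh : h ≠ 0) : lineCoord h hh (0, 1) = h := by
  simp [lineCoord]

theorem det_lineCoord (hh : h ≠ 0) : (lineCoord h hh).toLinearMap.det = -1 := by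
  have := (sq_add_sq_pos hh).ne'
  rw [← LinearMap.det_toMatrix (Basis.finTwoProd ℝ), Matrix.det_fin_two]
  simp only [LinearMap.toMatrix_apply, Basis.finTwoProd_zero, Basis.finTwoProd_one,
    Basis.coe_finTwoProd_repr, LinearEquiv.coe_coe, ContinuousLinearEquiv.coe_toLinearEquiv,
    lineCoord_one_zero, lineCoord_zero_one, Prod.smul_mk, smul_eq_mul, Matrix.cons_val_zero,
    Matrix.cons_val_one, Matrix.cons_val_fin_one]
  field_simp
  ring

theorem measurePreserving_lineCoord (hh : h ≠ 0) : MeasurePreserving (lineCoord h hh) := by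
  have hdet := det_lineCoord hh
  refine ⟨(lineCoord h hh).continuous.measurable, ?_⟩
  have hmap := Measure.map_linearMap_addHaar_eq_smul_addHaar (volume : Measure (ℝ × ℝ))
    (f := (lineCoord h hh).toLinearMap) (by rw [hdet]; norm_num)
  rw [hdet] at hmap
  simpa using hmap

theorem fst_image_lineCoord_preimage (hh : h ≠ 0) :
    Prod.fst '' (lineCoord h hh ⁻¹' Ω) = (fun z : ℝ × ℝ => -h.2 * z.1 + h.1 * z.2) '' Ω := by
  rw [← ContinuousLinearEquiv.image_symm_eq_preimage, image_image]
  rfl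

theorem volume_real_fst_image_lineCoord_preimage (hΩc : IsCompact Ω) (hΩ : Convex ℝ Ω)
    (hh : h ≠ 0) : volume.real (Prod.fst '' (lineCoord h hh ⁻¹' Ω)) = widthPar Ω h := by
  rw [volume_real_eq_sSup_sub_sInf, fst_image_lineCoord_preimage, widthPar]
  · exact ((lineCoord h hh).toHomeomorph.isCompact_preimage.2 hΩc).image continuous_fst
  · exact (hΩ.linear_preimage (lineCoord h hh).toLinearMap).linear_image (LinearMap.fst ℝ ℝ ℝ)

theorem widthPar_pos (hΩc : IsCompact Ω) (hΩ : Convex ℝ Ω) (hΩint : (interior Ω).Nonempty)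
    (hh : h ≠ 0) : 0 < widthPar Ω h := by
  have hopen : IsOpen (Prod.fst '' (lineCoord h hh ⁻¹' interior Ω)) :=
    isOpenMap_fst _ (isOpen_interior.preimage (lineCoord h hh).continuous)
  have hne : (Prod.fst '' (lineCoord h hh ⁻¹' interior Ω)).Nonempty :=
    (hΩint.preimage (lineCoord h hh).surjective).image _
  have hcompact := ((lineCoord h hh).toHomeomorph.isCompact_preimage.2 hΩc).image continuous_fst
  rw [← volume_real_fst_image_lineCoord_preimage hΩc hΩ hh]
  exact ENNReal.toReal_pos ((hopen.measure_pos volume hne).trans_le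
    (measure_mono (image_mono (preimage_mono interior_subset)))).ne' hcompact.measure_ne_top

theorem L1N_uh_eq_setIntegral_lineCoord (hh : h ≠ 0) :
    L1N Ω (uh h u) = ∫ z in lineCoord h hh ⁻¹' Ω,
      |fderiv ℝ (u ∘ lineCoord h hh) z (0, 1)| ∂(volume.prod volume) := by
  rw [L1N, ← (measurePreserving_lineCoord hh).setIntegral_preimage_emb
    (lineCoord h hh).toHomeomorph.measurableEmbedding, Measure.volume_eq_prod]
  refine integral_congr_ae (ae_of_all _ fun z => ?_)
  simp only [ContinuousLinearEquiv.comp_right_fderiv, ContinuousLinearMap.comp_apply,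
    ContinuousLinearEquiv.coe_coe, lineCoord_zero_one, uh]

theorem sSup_image_comp_lineCoord (hh : h ≠ 0) :
    sSup ((u ∘ lineCoord h hh) '' (lineCoord h hh ⁻¹' Ω)) = sSup (u '' Ω) := by
  rw [image_comp, image_preimage_eq _ (lineCoord h hh).surjective]

namespace IsConcaveCap

theorem sSup_image_mul_widthPar_le (hu : IsConcaveCap Ω u) (hh : h ≠ 0) :
    sSup (u '' Ω) * widthPar Ω h ≤ L1N Ω (uh h u) := by
  have hle := (hu.comp_continuousLinearEquiv (lineCoord h hh)).le_integral_abs_fderiv_snd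
    (μ := volume)
  rw [sSup_image_comp_lineCoord, ← L1N_uh_eq_setIntegral_lineCoord,
    volume_real_fst_image_lineCoord_preimage hu.isCompact hu.concaveOn.1, finrank_self,
    Nat.cast_one, one_add_one_eq_two] at hle
  exact le_of_mul_le_mul_left hle two_pos

theorem L1N_uh_le (hu : IsConcaveCap Ω u) (hh : h ≠ 0) :
    L1N Ω (uh h u) ≤ 2 * (sSup (u '' Ω) * widthPar Ω h) := by
  have hle := (hu.comp_continuousLinearEquiv (lineCoord h hh)).integral_abs_fderiv_snd_le
    (μ := volume)
  rwa [sSup_image_comp_lineCoord, ← L1N_uh_eq_setIntegral_lineCoord,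
    volume_real_fst_image_lineCoord_preimage hu.isCompact hu.concaveOn.1] at hle

end IsConcaveCap

end Plane

theorem stmt_7_general {Ω : Set (ℝ × ℝ)} {u : ℝ × ℝ → ℝ} (hu : IsConcaveCap Ω u)
    (hΩint : (interior Ω).Nonempty) {h₁ h₂ : ℝ × ℝ} (hh₁ : h₁ ≠ 0) (hh₂ : h₂ ≠ 0) :
    L1N Ω (uh h₁ u) ≤ 2 * (widthPar Ω h₁ / widthPar Ω h₂) * L1N Ω (uh h₂ u) := by
  have hw₁ := widthPar_pos hu.isCompact hu.concaveOn.1 hΩint hh₁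
  have hw₂ := widthPar_pos hu.isCompact hu.concaveOn.1 hΩint hh₂
  calc L1N Ω (uh h₁ u)
      ≤ 2 * (sSup (u '' Ω) * widthPar Ω h₁) := hu.L1N_uh_le hh₁
    _ = 2 * (widthPar Ω h₁ / widthPar Ω h₂) * (sSup (u '' Ω) * widthPar Ω h₂) := by field_simp
    _ ≤ 2 * (widthPar Ω h₁ / widthPar Ω h₂) * L1N Ω (uh h₂ u) := by
        gcongr
        exact hu.sSup_image_mul_widthPar_le hh₂

theorem ne_zero_of_sq_add_sq_eq_one {h : ℝ × ℝ} (hh : h.1 ^ 2 + h.2 ^ 2 = 1) : h ≠ 0 := by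
  rintro rfl
  simp at hh

/-- Corollary 1: for unit vectors `h₁, h₂` with widths `w₁, w₂` of `Ω`
parallel to them, `‖u_{h₁}‖₁ ≤ 2 (w₁/w₂) ‖u_{h₂}‖₁` for every `u ∈ 𝒰_Ω`. -/
theorem stmt_7 (Ω : Set (ℝ × ℝ)) (hΩc : IsCompact Ω) (hΩconv : Convex ℝ Ω)
    (hΩint : (interior Ω).Nonempty)
    (h₁ h₂ : ℝ × ℝ) (hh₁ : h₁.1 ^ 2 + h₁.2 ^ 2 = 1) (hh₂ : h₂.1 ^ 2 + h₂.2 ^ 2 = 1)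
    (u : ℝ × ℝ → ℝ) (hu : MemU Ω u) :
    L1N Ω (uh h₁ u) ≤ 2 * (widthPar Ω h₁ / widthPar Ω h₂) * L1N Ω (uh h₂ u) := by
  exact stmt_7_general ⟨hΩc, hu.1, hu.2.1, hu.2.2.1⟩ hΩint (ne_zero_of_sq_add_sq_eq_one hh₁)
    (ne_zero_of_sq_add_sq_eq_one hh₂)
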